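/- arXiv:2205.01352 — 2 statements merged into one kernel-verified Lean document; each statement's English description precedes it below -/
import Mathlib

section
/- Let A be a complex unital semisimple Banach *-algebra and W a left separating point of A. If δ : A → A is linear and satisfies δ(W) = Aδ(B)* + B*δ(A) whenever AB* = W, then δ = 0. -/
open MulOpposite

/-!
Put `d = W δ` and `S x = (δ((x W)*))* - x δ(W)`. Applying the hypothesis to the factorizations
`x⁻¹ (x W) = W` gives `x² d(x⁻¹) = -S x` for every unit `x`. When `x + y = 1` are units,
`(x y)⁻¹ = x⁻¹ + y⁻¹` turns this into `S(x²) = 2 x S(x)`; translating by large scalars makes `S` a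
Jordan left derivation, and then `d = S`. Since `W` is left separating it suffices that `d = 0`.

A Jordan left derivation satisfies `⁅a, ⁅a, b⁆⁆ d(a) = 0`. Jacobson density on the simple modules
`A ⧸ L`, which are either one-dimensional or annihilated by every `d a`, therefore shows that `d` is
central-valued. On the centre `d` is a derivation of a commutative semisimple Banach algebra; it is
continuous by a gliding hump argument (Johnson), and `φ(D a) = 0` for each character `φ` because
`φ(Dⁿ (aⁿ)) = n! φ(D a)ⁿ` whenever `φ a = 0` (Singer–Wermer). Hence `d` vanishes on the centre, so
that `d (d a) = d (a²) = 0` and `(d a)² = 0`, and a nilpotent central element is zero.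
-/

open Filter Topology

theorem isSMulRegular_two (k : Type*) {M : Type*} [Field k] [NeZero (2 : k)] [AddCommGroup M]
    [Module k M] : IsSMulRegular M (2 : ℕ) := fun x y hxy =>
  smul_right_injective M (two_ne_zero (α := k)) (by simpa [two_smul] using hxy)

/-- The defining identity `d (x²) = 2 x d(x)` of a Jordan left derivation of a ring. Additivity or
linearity of `d` is not part of the predicate: it is carried by the bundled map `d`. -/
def IsJordanLeftDerivation {A : Type*} [Ring A] (d : A → A) : Prop :=
  ∀ x, d (x * x) = 2 * (x * d x)

namespace IsJordanLeftDerivation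

variable {A F : Type*} [Ring A]

theorem map_one_eq_zero {d : A → A} (hd : IsJordanLeftDerivation d) : d 1 = 0 := by
  simpa [two_mul] using hd 1

variable [FunLike F A A] [AddMonoidHomClass F A A] {d : F}

theorem map_mul_add_mul (hd : IsJordanLeftDerivation d) (a b : A) :
    d (a * b + b * a) = 2 * (a * d b) + 2 * (b * d a) := by
  have polarization : a * b + b * a = (a + b) * (a + b) - a * a - b * b := by noncomm_ring
  rw [polarization, map_sub, map_sub, hd, hd, hd, map_add]
  noncomm_ring

theorem map_mul_mul_self (hd : IsJordanLeftDerivation d) (h2 : IsSMulRegular A (2 : ℕ)) (a b : A) :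
    d (a * b * a) = a * a * d b + 3 * (a * b * d a) - b * a * d a := by
  have expansion : 2 • (a * b * a) =
      a * (a * b + b * a) + (a * b + b * a) * a - (a * a * b + b * (a * a)) := by noncomm_ring
  apply h2
  simp only [← map_nsmul]
  rw [expansion, map_sub, hd.map_mul_add_mul, hd.map_mul_add_mul, hd.map_mul_add_mul, hd]
  noncomm_ring

theorem map_mul_mul_add_mul_mul (hd : IsJordanLeftDerivation d) (h2 : IsSMulRegular A (2 : ℕ))
    (a b c : A) :
    d (a * b * c + c * b * a) = (a * c + c * a) * d b + 3 * (a * b * d c) + 3 * (c * b * d a)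
      - b * a * d c - b * c * d a := by
  have polarization : a * b * c + c * b * a =
      (a + c) * b * (a + c) - a * b * a - c * b * c := by noncomm_ring
  rw [polarization, map_sub, map_sub]
  simp only [hd.map_mul_mul_self h2, map_add]
  noncomm_ring

theorem lie_mul_map_mul (hd : IsJordanLeftDerivation d) (h2 : IsSMulRegular A (2 : ℕ)) (a b : A) :
    ⁅a, b⁆ * d (a * b) = a * ⁅a, b⁆ * d b + b * ⁅a, b⁆ * d a := by
  have two_ways : a * b * (a * b) + a * b * b * a = a * b * (a * b) + a * (b * b) * a := by
    noncomm_ring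
  have h := congrArg d two_ways
  rw [hd.map_mul_mul_add_mul_mul h2, map_add, hd, hd.map_mul_mul_self h2, hd] at h
  rw [← sub_eq_zero] at h ⊢
  rw [← h, Ring.lie_def]
  noncomm_ring

theorem lie_lie_mul_map (hd : IsJordanLeftDerivation d) (h2 : IsSMulRegular A (2 : ℕ)) (a b : A) :
    ⁅a, ⁅a, b⁆⁆ * d a = 0 := by
  have shifted := hd.lie_mul_map_mul h2 a (a + b)
  have lie_add_self : ⁅a, a + b⁆ = ⁅a, b⁆ := by
    simp only [Ring.lie_def]
    noncomm_ring
  rw [lie_add_self, mul_add a, map_add, map_add, mul_add, hd.lie_mul_map_mul h2, hd]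
    at shifted
  apply h2.right_eq_zero_of_smul
  rw [← sub_eq_zero] at shifted
  rw [← neg_eq_zero, ← shifted, Ring.lie_def a ⁅a, b⁆]
  noncomm_ring

theorem sq_mul_map_inv (hd : IsJordanLeftDerivation d) (h2 : IsSMulRegular A (2 : ℕ)) (x : Aˣ) :
    (x * x : A) * d ↑x⁻¹ = -d x := by
  have h := hd.map_mul_mul_self h2 (x : A) ↑x⁻¹
  simp only [Units.mul_inv, Units.inv_mul, one_mul] at h
  rw [← sub_eq_zero] at h ⊢
  rw [← neg_eq_zero, ← h]
  noncomm_ring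

end IsJordanLeftDerivation

section DenseAction

open Module Submodule

variable {k A M : Type*} [Field k] [Ring A] [Algebra k A] [AddCommGroup M] [Module k M]
  [Module A M] [IsScalarTower k A M]

theorem exists_notMem_span_singleton_of_smul_smul_eq_zero (hrank : 1 < Module.rank k M) {n : A}
    (hn : ∀ m : M, n • n • m = 0) :
    ∃ v w : M, v ≠ 0 ∧ w ∉ span k {v} ∧ n • v = 0 ∧ n • w ∈ span k {v} := by
  by_cases hzero : ∀ m : M, n • m = 0
  · have exists_notMem (v : M) : ∃ w, w ∉ span k {v} := by
      by_contra! hspan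
      exact hrank.not_ge (rank_le_one_iff.mpr ⟨v, fun w => mem_span_singleton.mp (hspan w)⟩)
    obtain ⟨v, hv⟩ := exists_notMem 0
    obtain ⟨w, hw⟩ := exists_notMem v
    exact ⟨v, w, by simpa using hv, hw, hzero v, by simp [hzero w]⟩
  · push Not at hzero
    obtain ⟨w, hw⟩ := hzero
    refine ⟨n • w, w, hw, fun hmem => hw ?_, hn w, mem_span_singleton_self _⟩
    obtain ⟨r, hr⟩ := mem_span_singleton.mp hmem
    rw [← hr, smul_comm, hn, smul_zero]

variable [IsSimpleModule A M]

theorem exists_smul_eq_apply (hM : Function.Surjective (algebraMap k (End A M)))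
    (g : M →ₗ[k] M) (s : Finset M) : ∃ b : A, ∀ m ∈ s, b • m = g m := by
  let G : End (End A M) M :=
    { toFun := g
      map_add' := map_add g
      map_smul' := fun f m => by
        obtain ⟨c, rfl⟩ := hM f
        simp }
  obtain ⟨b, hb⟩ := jacobson_density G s
  exact ⟨b, fun m hm => (hb m hm).symm⟩

theorem smul_mem_span_singleton_of_lie_lie_smul_eq_zero [NeZero (2 : k)]
    (hM : Function.Surjective (algebraMap k (End A M))) {a : A} {v : M}
    (h : ∀ b : A, ⁅a, ⁅a, b⁆⁆ • v = 0) : a • v ∈ span k {v} := by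
  classical
  by_contra hav
  obtain ⟨f, hf, hfv⟩ := exists_le_ker_of_notMem hav
  rw [span_singleton_le_iff_mem, LinearMap.mem_ker] at hfv
  obtain ⟨b, hb⟩ := exists_smul_eq_apply hM (f.smulRight v) {v, a • v, a • a • v}
  have hb₀ : b • v = 0 := by simpa [hfv] using hb v (by simp)
  have hb₁ : b • a • v = f (a • v) • v := hb _ (by simp)
  have hb₂ : b • a • a • v = f (a • a • v) • v := hb _ (by simp)
  have relation : f (a • a • v) • v = (2 * f (a • v)) • a • v := by
    have h := h b
    simp only [Ring.lie_def, mul_sub, sub_mul, sub_smul, mul_smul, hb₀, hb₁, hb₂, smul_zero,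
      smul_comm a (f (a • v))] at h
    rw [mul_smul, two_smul, ← sub_eq_zero, ← h]
    abel
  apply hav
  rw [← inv_smul_smul₀ (mul_ne_zero two_ne_zero hf) (a • v), ← relation]
  exact smul_mem _ _ (smul_mem _ _ (mem_span_singleton_self v))

theorem exists_sub_algebraMap_sq_smul_eq_zero [NeZero (2 : k)]
    (hM : Function.Surjective (algebraMap k (End A M))) {a : A} {v : M} (hv : v ≠ 0)
    (h : ∀ b : A, ⁅a, ⁅a, b⁆⁆ • v = 0) :
    ∃ c : k, ∀ m : M, (a - algebraMap k A c) • (a - algebraMap k A c) • m = 0 := by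
  obtain ⟨c, hc⟩ := mem_span_singleton.mp (smul_mem_span_singleton_of_lie_lie_smul_eq_zero hM h)
  refine ⟨c, fun m => ?_⟩
  set n := a - algebraMap k A c with hn
  have hnv : n • v = 0 := by rw [hn, sub_smul, algebraMap_smul, hc, sub_self]
  have hlie (b : A) : ⁅a, ⁅a, b⁆⁆ = ⁅n, ⁅n, b⁆⁆ := by
    have comm (y : A) : ⁅a, y⁆ = ⁅n, y⁆ := by
      rw [hn, Ring.lie_def, Ring.lie_def, sub_mul, mul_sub, Algebra.commutes]
      abel
    rw [comm, comm]
  obtain ⟨b, hb : b • v = m⟩ := IsSimpleModule.toSpanSingleton_surjective A hv m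
  have h := h b
  rw [hlie] at h
  simpa only [Ring.lie_def, mul_sub, sub_mul, sub_smul, mul_smul, hnv, hb, smul_zero, sub_zero]
    using h

theorem eq_zero_of_lie_lie_smul_apply_eq_zero [NeZero (2 : k)]
    (hM : Function.Surjective (algebraMap k (End A M))) (hrank : 1 < Module.rank k M)
    (D : A →ₗ[k] M) (hD1 : D 1 = 0) (hD : ∀ a b : A, ⁅a, ⁅a, b⁆⁆ • D a = 0) : D = 0 := by
  classical
  by_contra hne
  obtain ⟨a, ha⟩ : ∃ a, D a ≠ 0 := by simpa [LinearMap.ext_iff] using hne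
  obtain ⟨c, hc⟩ := exists_sub_algebraMap_sq_smul_eq_zero hM ha (hD a)
  set n := a - algebraMap k A c with hn
  have hDn : D n ≠ 0 := by simpa [hn, Algebra.algebraMap_eq_smul_one, hD1] using ha
  obtain ⟨v, w, hv, hw, hnv, hnw⟩ := exists_notMem_span_singleton_of_smul_smul_eq_zero hrank hc
  obtain ⟨f, hfw, hfv⟩ := exists_le_ker_of_notMem hw
  rw [span_singleton_le_iff_mem, LinearMap.mem_ker] at hfv
  obtain ⟨b, hb⟩ := exists_smul_eq_apply hM (f.smulRight ((f w)⁻¹ • w)) {v, w}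
  have hbv : b • v = 0 := by simpa [hfv] using hb v (by simp)
  have hbw : b • w = w := by simpa [hfw] using hb w (by simp)
  -- On `span {v, w}` both `b` and `b + n` are triangular with the distinct eigenvalues `0` and `1`,
  -- and `D` does not vanish on both of them.
  obtain ⟨x, hDx, hxv, hxw⟩ : ∃ x : A, D x ≠ 0 ∧ x • v = 0 ∧ x • w - w ∈ span k {v} := by
    by_cases hDb : D b = 0
    · exact ⟨b + n, by simpa [hDb] using hDn, by rw [add_smul, hbv, hnv, add_zero],
        by rwa [add_smul, hbw, add_sub_cancel_left]⟩
    · exact ⟨b, hDb, hbv, by simp [hbw]⟩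
  obtain ⟨e, he⟩ := exists_sub_algebraMap_sq_smul_eq_zero hM hDx (hD x)
  have he0 : e = 0 := by simpa [sub_smul, smul_comm x e, hxv, hv] using he v
  have hxxw : x • x • w = 0 := by simpa [he0] using he w
  obtain ⟨s, hs⟩ := mem_span_singleton.mp hxw
  have hxw_eq : x • w = 0 := by
    rw [← hxxw, ← sub_add_cancel (x • w) w, ← hs, smul_add, smul_comm, hxv, smul_zero, zero_add,
      hs, sub_add_cancel]
  exact hw (by simpa [hxw_eq] using hxw)

theorem IsJordanLeftDerivation.map_smul_smul_comm [NeZero (2 : k)]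
    (hM : Function.Surjective (algebraMap k (End A M))) {d : A →ₗ[k] A}
    (hd : IsJordanLeftDerivation d) (a b : A) (m : M) : d a • b • m = b • d a • m := by
  rcases lt_or_ge 1 (Module.rank k M) with hrank | hrank
  · have map_smul_eq_zero (m : M) : d a • m = 0 := by
      have hD := eq_zero_of_lie_lie_smul_apply_eq_zero hM hrank
        ((LinearMap.toSpanSingleton A M m).restrictScalars k ∘ₗ d)
        (by simp [hd.map_one_eq_zero])
        (fun x y => by simp [← mul_smul, hd.lie_lie_mul_map (isSMulRegular_two k)])
      simpa using LinearMap.congr_fun hD a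
    rw [map_smul_eq_zero, map_smul_eq_zero, smul_zero]
  · obtain ⟨v, hv⟩ := rank_le_one_iff.mp hrank
    obtain ⟨r, rfl⟩ := hv m
    obtain ⟨p, hp⟩ := hv (d a • v)
    obtain ⟨q, hq⟩ := hv (b • v)
    rw [smul_comm b r, smul_comm (d a) r, smul_comm (d a) r, smul_comm b r, ← hp, ← hq,
      smul_comm (d a) q, smul_comm b p, ← hp, ← hq, smul_comm p q]

end DenseAction

section SimpleQuotient

open Module

theorem continuous_end_quotient {R : Type*} [Ring R] [TopologicalSpace R] [IsTopologicalRing R]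
    {L : Ideal R} (f : End R (R ⧸ L)) : Continuous f := by
  obtain ⟨u, hu⟩ := L.mkQ_surjective (f (L.mkQ 1))
  have apply_mkQ (x : R) : f (L.mkQ x) = L.mkQ (x * u) := by
    rw [← mul_one x, ← smul_eq_mul, map_smul, map_smul, ← hu, ← map_smul, smul_eq_mul, smul_eq_mul,
      mul_one]
  rw [(Submodule.isQuotientMap_mkQ L).continuous_iff]
  refine Continuous.congr ?_ fun x => (apply_mkQ x).symm
  exact (Submodule.isQuotientMap_mkQ L).continuous.comp (continuous_mul_const u)

variable {A : Type*} [NormedRing A] [NormedAlgebra ℂ A] [CompleteSpace A]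

theorem algebraMap_end_quotient_surjective (L : Ideal A) [hL : L.IsMaximal] :
    Function.Surjective (algebraMap ℂ (End A (A ⧸ L))) := by
  have : IsSimpleModule A (A ⧸ L) := isSimpleModule_iff_isCoatom.mpr hL.out
  have : Nontrivial (A ⧸ L) := IsSimpleModule.nontrivial A _
  intro f
  let F : (A ⧸ L) →L[ℂ] (A ⧸ L) := ⟨f.restrictScalars ℂ, continuous_end_quotient f⟩
  obtain ⟨c, hc⟩ := spectrum.nonempty F
  have not_bijective : ¬Function.Bijective (algebraMap ℂ (End A (A ⧸ L)) c - f) := fun hbij =>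
    hc (ContinuousLinearMap.isUnit_iff_bijective.mpr hbij)
  exact ⟨c, sub_eq_zero.mp ((LinearMap.bijective_or_eq_zero _).resolve_left not_bijective)⟩

theorem eq_zero_of_forall_isMaximal_smul_eq_zero {R : Type*} [Ring R]
    (hss : (⊥ : Ideal R).jacobson = ⊥) {x : R}
    (hx : ∀ L : Ideal R, L.IsMaximal → ∀ m : R ⧸ L, x • m = 0) : x = 0 := by
  rw [← Ideal.mem_bot, ← hss, Ideal.jacobson, Ideal.mem_sInf]
  rintro L ⟨-, hL⟩
  have h := hx L hL (Submodule.Quotient.mk 1)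
  rwa [← Submodule.Quotient.mk_smul, Submodule.Quotient.mk_eq_zero, smul_eq_mul, mul_one] at h

theorem IsJordanLeftDerivation.map_mem_center (hss : (⊥ : Ideal A).jacobson = ⊥)
    {d : A →ₗ[ℂ] A} (hd : IsJordanLeftDerivation d) (a : A) : d a ∈ Subalgebra.center ℂ A := by
  rw [Subalgebra.mem_center_iff]
  refine fun b => sub_eq_zero.mp (eq_zero_of_forall_isMaximal_smul_eq_zero hss fun L hL m => ?_)
  have : IsSimpleModule A (A ⧸ L) := isSimpleModule_iff_isCoatom.mpr hL.out
  rw [sub_smul, mul_smul, mul_smul,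
    hd.map_smul_smul_comm (algebraMap_end_quotient_surjective L) a b m, sub_self]

end SimpleQuotient

section Center

variable {A : Type*} [NormedRing A] [NormedAlgebra ℂ A]

instance centerNormedCommRing : NormedCommRing (Subalgebra.center ℂ A) where
  mul_comm := mul_comm

variable [CompleteSpace A]

instance completeSpace_center : CompleteSpace (Subalgebra.center ℂ A) := by
  have isClosed_center : IsClosed (Set.center A) := by
    rw [← Set.centralizer_univ]
    exact Set.isClosed_centralizer _
  exact isClosed_center.completeSpace_coe

theorem eq_zero_of_forall_center_algHom_eq_zero (hss : (⊥ : Ideal A).jacobson = ⊥)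
    (z : Subalgebra.center ℂ A) (hz : ∀ φ : Subalgebra.center ℂ A →ₐ[ℂ] ℂ, φ z = 0) : z = 0 := by
  refine Subtype.ext (eq_zero_of_forall_isMaximal_smul_eq_zero hss fun L hL m => ?_)
  have : IsSimpleModule A (A ⧸ L) := isSimpleModule_iff_isCoatom.mpr hL.out
  have : Nontrivial (A ⧸ L) := IsSimpleModule.nontrivial A _
  obtain ⟨c, hc⟩ := algebraMap_end_quotient_surjective L (Module.End.smulLeft (z : A) z.2)
  have smul_eq (m : A ⧸ L) : (z : A) • m = c • m := (LinearMap.congr_fun hc m).symm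
  have mem_spectrum : c ∈ spectrum ℂ z := by
    refine AlgHom.spectrum_apply_subset (Subalgebra.center ℂ A).val z fun hunit => ?_
    obtain ⟨m, hm⟩ := exists_ne (0 : A ⧸ L)
    refine hm (hunit.smul_left_cancel.mp ?_)
    rw [smul_zero, sub_smul, algebraMap_smul]
    exact sub_eq_zero.mpr (smul_eq m).symm
  obtain ⟨φ, hφ⟩ := WeakDual.CharacterSpace.mem_spectrum_iff_exists.mp mem_spectrum
  have hc0 : c = 0 := hφ.symm.trans (hz (WeakDual.CharacterSpace.toAlgHom φ))
  rw [smul_eq, hc0, zero_smul]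

end Center

section GlidingHump

variable {𝕜 X Y : Type*} [NontriviallyNormedField 𝕜] [NormedAddCommGroup X] [NormedSpace 𝕜 X]
  [NormedAddCommGroup Y] [NormedSpace 𝕜 Y]

theorem exists_lt_norm_of_not_continuous {f : X →ₗ[𝕜] Y} (hf : ¬Continuous f) {U : Set X}
    (hU : U ∈ 𝓝 0) (K : ℝ) : ∃ x ∈ U, K < ‖f x‖ := by
  by_contra! hbound
  obtain ⟨r, hr, hball⟩ := Metric.mem_nhds_iff.mp hU
  obtain ⟨C, hC⟩ := f.bound_of_ball_bound hr K fun z hz => hbound z (hball hz)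
  exact hf (AddMonoidHomClass.continuous_of_bound f C hC)

theorem exists_seq_lt_norm_sum_of_not_continuous {Λ : ℕ → X →ₗ[𝕜] Y} {P : ℕ → X →L[𝕜] X}
    (hΛP : ∀ n, ¬Continuous fun x => Λ n (P n x)) {U : ℕ → Set X} (hU : ∀ n, U n ∈ 𝓝 0) :
    ∃ z : ℕ → X, ∀ n, z n ∈ U n ∧ n < ‖Λ n (∑ i ∈ Finset.range (n + 1), P i (z i))‖ := by
  have exists_next (n : ℕ) (s : X) : ∃ x ∈ U n, n < ‖Λ n (s + P n x)‖ := by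
    obtain ⟨x, hxU, hx⟩ := exists_lt_norm_of_not_continuous (f := Λ n ∘ₗ (P n : X →ₗ[𝕜] X))
      (hΛP n) (hU n) (n + ‖Λ n s‖)
    refine ⟨x, hxU, ?_⟩
    rw [map_add, add_comm]
    exact (lt_sub_iff_add_lt.mpr hx).trans_le (norm_sub_le_norm_add _ _)
  choose next next_mem next_lt using exists_next
  let s : ℕ → X := fun n => Nat.rec 0 (fun n s => s + P n (next n s)) n
  have s_eq_sum (n : ℕ) : s n = ∑ i ∈ Finset.range n, P i (next i (s i)) := by
    induction n with
    | zero => rfl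
    | succ n ih => rw [Finset.sum_range_succ, ← ih]
  refine ⟨fun n => next n (s n), fun n => ⟨next_mem n (s n), ?_⟩⟩
  rw [← s_eq_sum]
  exact next_lt n (s n)

theorem exists_continuous_comp_of_pointwise_bounded [CompleteSpace X] {Λ : ℕ → X →ₗ[𝕜] Y}
    {P : ℕ → X →L[𝕜] X} {Q : ℕ → ℕ → X →L[𝕜] X}
    (hPQ : ∀ m i, m ≤ i → ∀ x, P m (Q m i x) = P i x) (hΛP : ∀ n x, Λ n (P (n + 1) x) = 0)
    (hΛ : ∀ x, ∃ C, ∀ n, ‖Λ n x‖ ≤ C) : ∃ n, Continuous fun x => Λ n (P n x) := by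
  by_contra! hdisc
  have eventually_small (i : ℕ) : ∀ᶠ x in 𝓝 0, ∀ m ≤ i, ‖Q m i x‖ < (1 / 2 : ℝ) ^ i := by
    refine (Set.finite_le_nat i).eventually_all.mpr fun m _ => ?_
    have tendsto_norm : Tendsto (fun x => ‖Q m i x‖) (𝓝 0) (𝓝 0) := by
      simpa using (Q m i).continuous.norm.tendsto 0
    exact tendsto_norm.eventually_lt_const (by positivity)
  obtain ⟨z, hz⟩ := exists_seq_lt_norm_sum_of_not_continuous hdisc eventually_small
  have summable_tail (m : ℕ) : Summable fun i => Q m (i + m) (z (i + m)) :=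
    .of_norm_bounded ((summable_nat_add_iff m).mpr summable_geometric_two) fun i =>
      ((hz (i + m)).1 m (Nat.le_add_left m i)).le
  have map_tail (m : ℕ) : HasSum (fun i => P (i + m) (z (i + m)))
      (P m (∑' i, Q m (i + m) (z (i + m)))) := by
    simpa only [hPQ m _ (Nat.le_add_left m _)] using (P m).hasSum (summable_tail m).hasSum
  have summable_hump : Summable fun i => P i (z i) := by simpa using (map_tail 0).summable
  obtain ⟨x, hx⟩ := summable_hump
  -- The humps after the `n`-th one lie in the range of `P (n + 1)`, where `Λ n` vanishes.
  have map_x (n : ℕ) : Λ n x = Λ n (∑ i ∈ Finset.range (n + 1), P i (z i)) := by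
    rw [← hx.tsum_eq, ← hx.summable.sum_add_tsum_nat_add (n + 1), (map_tail (n + 1)).tsum_eq,
      map_add, hΛP, add_zero]
  obtain ⟨C, hC⟩ := hΛ x
  obtain ⟨n, hn⟩ := exists_nat_gt C
  exact hn.not_ge ((hz n).2.le.trans (map_x n ▸ hC n))

end GlidingHump

theorem exists_injective_apply {𝕜 X Y ι : Type*} [NontriviallyNormedField 𝕜]
    [NormedAddCommGroup X] [NormedSpace 𝕜 X] [CompleteSpace X] [NormedAddCommGroup Y]
    [NormedSpace 𝕜 Y] [Countable ι] {Λ : ι → X →L[𝕜] Y} (hΛ : Function.Injective Λ) :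
    ∃ x, Function.Injective fun i => Λ i x := by
  by_contra! hcoll
  let K (p : {p : ι × ι // p.1 ≠ p.2}) : Submodule 𝕜 X := (Λ p.1.1 - Λ p.1.2).ker
  have mem_K (p) (x : X) : x ∈ K p ↔ Λ p.1.1 x = Λ p.1.2 x := by
    simp only [K, LinearMap.mem_ker, ContinuousLinearMap.coe_coe, sub_apply, sub_eq_zero]
  have isClosed_K (p) : IsClosed (K p : Set X) := (Λ p.1.1 - Λ p.1.2).isClosed_ker
  have iUnion_K : ⋃ p, (K p : Set X) = Set.univ := by
    refine Set.eq_univ_of_forall fun x => ?_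
    obtain ⟨i, j, hij, hne⟩ := Function.not_injective_iff.mp (hcoll x)
    exact Set.mem_iUnion.mpr ⟨⟨(i, j), hne⟩, (mem_K _ x).mpr hij⟩
  obtain ⟨p, hp⟩ := nonempty_interior_of_iUnion_of_closed isClosed_K iUnion_K
  have K_eq_top : K p = ⊤ := (K p).eq_top_of_nonempty_interior' hp
  exact p.2 (hΛ (ContinuousLinearMap.ext fun x => (mem_K p x).mp (K_eq_top ▸ Submodule.mem_top)))

section Isolated

variable {k Z : Type*} [Field k] [CommRing Z] [Algebra k Z]

theorem exists_algHom_eq_one_eq_zero {φ ψ : Z →ₐ[k] k} (h : ψ ≠ φ) :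
    ∃ t, φ t = 1 ∧ ψ t = 0 := by
  obtain ⟨w, hw⟩ := DFunLike.ne_iff.mp h
  refine ⟨(φ w - ψ w)⁻¹ • (w - algebraMap k Z (ψ w)), ?_, by simp⟩
  simpa using inv_mul_cancel₀ (sub_ne_zero.mpr hw.symm)

theorem exists_algHom_eq_one_forall_eq_zero {φ : Z →ₐ[k] k} {s : Set (Z →ₐ[k] k)}
    (hs : s.Finite) (hφ : φ ∉ s) : ∃ t, φ t = 1 ∧ ∀ ψ ∈ s, ψ t = 0 := by
  have exists_pair (ψ : Z →ₐ[k] k) (hψ : ψ ∈ s) : ∃ t, φ t = 1 ∧ ψ t = 0 :=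
    exists_algHom_eq_one_eq_zero fun h => hφ (h ▸ hψ)
  choose! t map_t_one map_t_zero using exists_pair
  refine ⟨∏ ψ ∈ hs.toFinset, t ψ, ?_, fun ψ hψ => ?_⟩
  · rw [map_prod]
    exact Finset.prod_eq_one fun ψ hψ => map_t_one ψ (hs.mem_toFinset.mp hψ)
  · rw [map_prod]
    exact Finset.prod_eq_zero (hs.mem_toFinset.mpr hψ) (map_t_zero ψ hψ)

theorem algHom_derivation_eq_zero_of_isolated
    (hss : ∀ z : Z, (∀ φ : Z →ₐ[k] k, φ z = 0) → z = 0) (D : Derivation k Z Z) {φ : Z →ₐ[k] k}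
    {e : Z} (hφe : φ e = 1) (he : ∀ ψ : Z →ₐ[k] k, ψ ≠ φ → ψ e = 0) (x : Z) : φ (D x) = 0 := by
  have mul_eq_smul (y : Z) : e * y = φ y • e := by
    refine sub_eq_zero.mp (hss _ fun ψ => ?_)
    obtain rfl | hψ := eq_or_ne ψ φ
    · simp [hφe]
    · simp [he ψ hψ]
  have hDe : e * D e = 0 := by
    have h := congrArg (e * ·) (D.leibniz e e)
    have idem : e * e = e := by rw [mul_eq_smul, hφe, one_smul]
    simpa [idem, mul_add, ← mul_assoc] using h
  have h := congrArg (fun y => φ (e * y)) (D.leibniz e x)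
  simpa [mul_eq_smul x, hφe, hDe, mul_add, ← mul_assoc, mul_right_comm e] using h.symm

end Isolated

theorem exists_derivation_iterate_pow_eq {R Z : Type*} [CommRing R] [CommRing Z] [Algebra R Z]
    (D : Derivation R Z Z) (a : Z) (m k : ℕ) :
    ∃ c, D^[k] (a ^ (m + k)) = (m + k).descFactorial k * a ^ m * D a ^ k + a ^ (m + 1) * c := by
  induction k generalizing m with
  | zero => exact ⟨0, by simp⟩
  | succ k ih =>
    obtain ⟨c, hc⟩ := ih (m + 1)
    have index_succ : m + (k + 1) = m + 1 + k := by omega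
    have hfactorial :
        (m + 1 + k).descFactorial (k + 1) = (m + 1) * (m + 1 + k).descFactorial k := by
      rw [Nat.descFactorial_succ, Nat.add_sub_cancel]
    refine ⟨(m + 1 + k).descFactorial k * D (D a ^ k) + (m + 2) * D a * c + a * D c, ?_⟩
    rw [Function.iterate_succ_apply', index_succ, hc, hfactorial]
    simp only [map_add, D.leibniz, D.leibniz_pow, D.map_natCast, smul_eq_mul, nsmul_eq_mul,
      Nat.add_sub_cancel]
    push_cast
    ring

theorem eq_zero_of_eventually_factorial_mul_pow_le {r R C : ℝ} (hr : 0 ≤ r)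
    (h : ∀ᶠ n : ℕ in atTop, n.factorial * r ^ n ≤ R ^ n * C) : r = 0 := by
  by_contra hne
  have : 0 < r := hr.lt_of_ne' hne
  have tendsto_zero := (FloorSemiring.tendsto_pow_div_factorial_atTop (R / r)).mul_const C
  rw [zero_mul] at tendsto_zero
  refine zero_lt_one.not_ge (ge_of_tendsto tendsto_zero ?_)
  filter_upwards [h] with n hn
  rw [div_pow, div_div, div_mul_eq_mul_div, one_le_div (by positivity), mul_comm (r ^ n)]
  exact hn

section Derivation

variable {Z : Type*} [NormedCommRing Z] [NormedAlgebra ℂ Z] [CompleteSpace Z]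

theorem continuous_algHom_comp_of_continuous_mul {φ : Z →ₐ[ℂ] ℂ} (D : Derivation ℂ Z Z) {q : Z}
    (hq : φ q ≠ 0) (h : Continuous fun x => φ (D (q * x))) : Continuous fun x => φ (D x) := by
  have eq_div (x : Z) : φ (D x) = (φ (D (q * x)) - φ x * φ (D q)) / φ q := by
    rw [D.leibniz, eq_div_iff hq]
    simp [mul_comm]
  rw [funext eq_div]
  exact (h.sub ((AlgHom.toContinuousLinearMap φ).continuous.mul_const _)).div_const _

theorem finite_setOf_not_continuous_algHom_comp (D : Derivation ℂ Z Z) :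
    {φ : Z →ₐ[ℂ] ℂ | ¬Continuous fun x => φ (D x)}.Finite := by
  by_contra hinf
  let φ := Set.Infinite.natEmbedding _ hinf
  obtain ⟨x, hx⟩ := exists_injective_apply
    (Λ := fun n => AlgHom.toContinuousLinearMap (φ n : Z →ₐ[ℂ] ℂ)) fun m n hmn =>
      φ.injective (Subtype.ext (AlgHom.ext fun y => DFunLike.congr_fun hmn y))
  let p (j : ℕ) : Z := x - algebraMap ℂ Z ((φ j).1 x)
  -- Squares, so that `φ n ∘ D` also vanishes on the multiples of the `n`-th factor.
  let P (n : ℕ) : Z := ∏ j ∈ Finset.range n, p j ^ 2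
  have map_P_ne_zero (n : ℕ) : (φ n).1 (P n) ≠ 0 := by
    simp only [P, map_prod, Finset.prod_ne_zero_iff, map_pow, Finset.mem_range]
    intro j hj
    simpa [p, sub_eq_zero] using hx.ne hj.ne'
  obtain ⟨n, hn⟩ := exists_continuous_comp_of_pointwise_bounded
    (Λ := fun n => (φ n).1.toLinearMap ∘ₗ D.toLinearMap)
    (P := fun n => ContinuousLinearMap.mul ℂ Z (P n))
    (Q := fun m i => ContinuousLinearMap.mul ℂ Z (∏ j ∈ Finset.Ico m i, p j ^ 2))
    (fun m i hmi y => by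
      simp [P, ← mul_assoc, Finset.prod_range_mul_prod_Ico _ hmi])
    (fun n y => by
      have hp : (φ n).1 (p n) = 0 := by simp [p]
      simp [P, Finset.prod_range_succ, D.leibniz, D.leibniz_pow, hp])
    (fun y => ⟨_, fun n => AlgHom.norm_apply_le_self_mul_norm_one (φ n).1 (D y)⟩)
  exact (φ n).2 (continuous_algHom_comp_of_continuous_mul D (map_P_ne_zero n) hn)

theorem derivation_continuous (hss : ∀ z : Z, (∀ φ : Z →ₐ[ℂ] ℂ, φ z = 0) → z = 0)
    (D : Derivation ℂ Z Z) : Continuous D := by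
  refine D.toLinearMap.continuous_of_seq_closed_graph fun u x y hu hDu => ?_
  rw [← sub_eq_zero]
  set s := y - D x
  have map_s_of_continuous (ψ : Z →ₐ[ℂ] ℂ) (hψ : Continuous fun x => ψ (D x)) : ψ s = 0 := by
    rw [map_sub, sub_eq_zero]
    exact tendsto_nhds_unique
      (((AlgHom.toContinuousLinearMap ψ).continuous.tendsto y).comp hDu) ((hψ.tendsto x).comp hu)
  refine hss s fun φ => by_contra fun hφs => ?_
  have hφ : ¬Continuous fun x => φ (D x) := fun h => hφs (map_s_of_continuous φ h)
  obtain ⟨t, hφt, ht⟩ := exists_algHom_eq_one_forall_eq_zero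
    ((finite_setOf_not_continuous_algHom_comp D).subset Set.sdiff_subset)
    (fun h : φ ∈ _ \ {φ} => h.2 rfl)
  have map_t_mul_s (ψ : Z →ₐ[ℂ] ℂ) (hψ : ψ ≠ φ) : ψ (t * s) = 0 := by
    rw [map_mul]
    by_cases hcont : Continuous fun x => ψ (D x)
    · rw [map_s_of_continuous ψ hcont, mul_zero]
    · rw [ht ψ ⟨hcont, hψ⟩, zero_mul]
  have map_D_eq_zero := algHom_derivation_eq_zero_of_isolated hss D (φ := φ)
    (e := (φ s)⁻¹ • (t * s)) (by simp [hφt, hφs])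
    fun ψ hψ => by rw [map_smul, map_t_mul_s ψ hψ, smul_zero]
  exact hφ (by simpa only [map_D_eq_zero] using continuous_const)

theorem algHom_derivation_eq_zero_of_continuous {D : Derivation ℂ Z Z} (hD : Continuous D)
    (φ : Z →ₐ[ℂ] ℂ) (x : Z) : φ (D x) = 0 := by
  set a := x - algebraMap ℂ Z (φ x) with ha
  have hφa : φ a = 0 := by simp [ha]
  have hDa : D a = D x := by simp [ha]
  have map_iterate (n : ℕ) : φ (D^[n] (a ^ n)) = n.factorial * φ (D a) ^ n := by
    obtain ⟨c, hc⟩ := exists_derivation_iterate_pow_eq D a 0 n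
    rw [zero_add] at hc
    simp [hc, hφa, Nat.descFactorial_self]
  let F : Z →L[ℂ] Z := ⟨D.toLinearMap, hD⟩
  have growth (n : ℕ) (hn : 0 < n) :
      n.factorial * ‖φ (D a)‖ ^ n ≤ (‖F‖ * ‖a‖) ^ n * ‖(1 : Z)‖ := calc
    n.factorial * ‖φ (D a)‖ ^ n = ‖φ (D^[n] (a ^ n))‖ := by simp [map_iterate]
    _ ≤ ‖F^[n] (a ^ n)‖ * ‖(1 : Z)‖ := AlgHom.norm_apply_le_self_mul_norm_one φ _
    _ ≤ ‖F‖ ^ n * ‖a ^ n‖ * ‖(1 : Z)‖ := by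
      gcongr
      exact (F.lipschitz.iterate n).norm_le_mul (iterate_map_zero F n) _
    _ ≤ ‖F‖ ^ n * ‖a‖ ^ n * ‖(1 : Z)‖ := by
      gcongr
      exact norm_pow_le' a hn
    _ = (‖F‖ * ‖a‖) ^ n * ‖(1 : Z)‖ := by rw [mul_pow]
  rw [← hDa, ← norm_eq_zero]
  exact eq_zero_of_eventually_factorial_mul_pow_le (norm_nonneg _)
    ((eventually_gt_atTop 0).mono growth)

theorem derivation_eq_zero (hss : ∀ z : Z, (∀ φ : Z →ₐ[ℂ] ℂ, φ z = 0) → z = 0)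
    (D : Derivation ℂ Z Z) : D = 0 :=
  Derivation.ext fun x => hss _ fun φ =>
    algHom_derivation_eq_zero_of_continuous (derivation_continuous hss D) φ x

end Derivation

namespace IsJordanLeftDerivation

variable {A : Type*} [NormedRing A] [NormedAlgebra ℂ A] [CompleteSpace A] {d : A →ₗ[ℂ] A}

theorem map_eq_zero_of_mem_center (hss : (⊥ : Ideal A).jacobson = ⊥)
    (hd : IsJordanLeftDerivation d) {z : A} (hz : z ∈ Subalgebra.center ℂ A) : d z = 0 := by
  let L : Subalgebra.center ℂ A →ₗ[ℂ] Subalgebra.center ℂ A :=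
    { toFun := fun x => ⟨d x, hd.map_mem_center hss x⟩
      map_add' := fun x y => Subtype.ext (map_add d (x : A) y)
      map_smul' := fun c x => Subtype.ext (map_smul d c (x : A)) }
  let D : Derivation ℂ (Subalgebra.center ℂ A) (Subalgebra.center ℂ A) := .mk' L fun x y => by
    refine Subtype.ext (isSMulRegular_two ℂ ?_)
    have h := hd.map_mul_add_mul (x : A) y
    rw [Subalgebra.mem_center_iff.mp x.2 y, map_add, ← two_nsmul, ← mul_add, two_mul,
      ← two_nsmul] at h
    exact h
  have hD : D = 0 := derivation_eq_zero (eq_zero_of_forall_center_algHom_eq_zero hss) D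
  exact congrArg Subtype.val (DFunLike.congr_fun hD ⟨z, hz⟩)

theorem eq_zero (hss : (⊥ : Ideal A).jacobson = ⊥) (hd : IsJordanLeftDerivation d) : d = 0 := by
  ext a
  have mem_center (x : A) : d x ∈ Subalgebra.center ℂ A := hd.map_mem_center hss x
  have sq_eq_zero : d a * d a = 0 := by
    have h := hd.map_mul_add_mul a (d a)
    have sum_eq : a * d a + d a * a = d (a * a) := by
      rw [hd, two_mul, Subalgebra.mem_center_iff.mp (mem_center a) a]
    rw [sum_eq, hd.map_eq_zero_of_mem_center hss (mem_center _),
      hd.map_eq_zero_of_mem_center hss (mem_center _), mul_zero, mul_zero, zero_add, two_mul,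
      ← two_nsmul] at h
    exact (isSMulRegular_two ℂ).right_eq_zero_of_smul h.symm
  let z : Subalgebra.center ℂ A := ⟨d a, mem_center a⟩
  have hz : z * z = 0 := Subtype.ext sq_eq_zero
  refine congrArg Subtype.val (eq_zero_of_forall_center_algHom_eq_zero hss z fun φ => ?_)
  rw [← mul_self_eq_zero, ← map_mul, hz, map_zero]

end IsJordanLeftDerivation

section Units

theorem eventually_isUnit_natCast_add {A : Type*} [NormedRing A] [NormedAlgebra ℂ A]
    [CompleteSpace A] (z : A) : ∀ᶠ n : ℕ in atTop, IsUnit ((n : A) + z) := by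
  filter_upwards [tendsto_natCast_atTop_atTop.eventually_gt_atTop (‖-z‖ * ‖(1 : A)‖)] with n hn
  have h := spectrum.mem_resolventSet_of_norm_lt_mul (𝕜 := ℂ) (a := -z) (k := n) (by simpa using hn)
  simpa [spectrum.mem_resolventSet_iff] using h

variable {A F G : Type*} [Ring A] [FunLike F A A] [FunLike G A A] [AddMonoidHomClass G A A]
  {S : F} {d : G}

theorem map_mul_of_sq_mul_map_inv (h : ∀ x : Aˣ, (x * x : A) * d ↑x⁻¹ = -S x) {x y : Aˣ}
    (hxy : (x + y : A) = 1) : S (x * y : A) = y * y * S x + x * x * S y := by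
  have hcomm : Commute (x : A) y := by
    rw [eq_sub_of_add_eq' hxy]
    exact (Commute.one_right _).sub_right (Commute.refl _)
  have sq_left : (x * y * (x * y) : A) = x * x * (y * y) := hcomm.symm.mul_mul_mul_comm _ _
  have sq_right : (x * y * (x * y) : A) = y * y * (x * x) := by
    rw [hcomm.eq, hcomm.mul_mul_mul_comm]
  have inv_mul : (↑(x * y)⁻¹ : A) = ↑x⁻¹ + ↑y⁻¹ := calc
    (↑(x * y)⁻¹ : A) = ↑y⁻¹ * (x + y) * ↑x⁻¹ := by simp [hxy]
    _ = ↑x⁻¹ + ↑y⁻¹ := by rw [mul_add, add_mul]; simp [add_comm]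
  refine neg_injective ?_
  calc -S (x * y : A) = x * y * (x * y) * d ↑x⁻¹ + x * y * (x * y) * d ↑y⁻¹ := by
        rw [← Units.val_mul, ← h, inv_mul, map_add, mul_add, Units.val_mul]
    _ = y * y * (x * x * d ↑x⁻¹) + x * x * (y * y * d ↑y⁻¹) := by
        rw [← mul_assoc (y * y : A), ← mul_assoc (x * x : A), ← sq_right, ← sq_left]
    _ = -(y * y * S x + x * x * S y) := by rw [h, h, mul_neg, mul_neg, neg_add]

variable [AddMonoidHomClass F A A]

theorem map_mul_self_of_sq_mul_map_inv (h : ∀ x : Aˣ, (x * x : A) * d ↑x⁻¹ = -S x) (hS1 : S 1 = 0)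
    {x y : Aˣ} (hxy : (x + y : A) = 1) : S (x * x : A) = 2 * (x * S x) := by
  have hS := map_mul_of_sq_mul_map_inv h hxy
  rw [eq_sub_of_add_eq' hxy, mul_sub, mul_one, map_sub, map_sub, hS1] at hS
  rw [← sub_eq_zero] at hS ⊢
  rw [← neg_eq_zero, ← hS]
  noncomm_ring

end Units

section BanachUnits

variable {A F G : Type*} [NormedRing A] [NormedAlgebra ℂ A] [CompleteSpace A] [FunLike F A A]
  [AddMonoidHomClass F A A] [FunLike G A A] [AddMonoidHomClass G A A] {S : F} {d : G}

theorem isJordanLeftDerivation_of_sq_mul_map_inv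
    (h : ∀ x : Aˣ, (x * x : A) * d ↑x⁻¹ = -S x) (hS1 : S 1 = 0) : IsJordanLeftDerivation S := by
  intro z
  obtain ⟨n, hn⟩ := (eventually_isUnit_natCast_add z).exists_forall_of_atTop
  obtain ⟨y, hy⟩ := hn n le_rfl
  obtain ⟨x, hx⟩ := hn (n + 1) n.le_succ
  have map_natCast (m : ℕ) : S (m : A) = 0 := by
    rw [← nsmul_one, map_nsmul, hS1, smul_zero]
  have hS := map_mul_self_of_sq_mul_map_inv h hS1 (x := x) (y := -y) (by simp [hx, hy])
  have sq_eq : (x * x : A) = ((n + 1) * (n + 1) : ℕ) + (2 * (n + 1)) • z + z * z := by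
    rw [hx, add_mul, mul_add, mul_add, ← (Nat.cast_commute (n + 1) z).eq, nsmul_eq_mul]
    push_cast
    noncomm_ring
  have two_mul_eq : 2 * (((n + 1 : ℕ) : A) * S z) = (2 * (n + 1)) • S z := by
    simp [nsmul_eq_mul, mul_assoc]
  rw [sq_eq, hx, map_add, map_add, map_add, map_natCast, map_natCast, map_nsmul, zero_add, zero_add,
    add_mul, mul_add (2 : A), two_mul_eq] at hS
  exact add_left_cancel hS

theorem eq_of_sq_mul_map_inv (h : ∀ x : Aˣ, (x * x : A) * d ↑x⁻¹ = -S x) (hS1 : S 1 = 0) (z : A) :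
    S z = d z := by
  have map_unit (x : Aˣ) : S (x : A) = d x := by
    have hS := isJordanLeftDerivation_of_sq_mul_map_inv h hS1
    have hx := (hS.sq_mul_map_inv (isSMulRegular_two ℂ) x⁻¹).trans (h x⁻¹).symm
    rw [← Units.val_mul] at hx
    simpa using (Units.mul_right_inj _).mp hx
  obtain ⟨n, x, hx⟩ := (eventually_isUnit_natCast_add z).exists
  have hd1 : d 1 = 0 := by simpa [hS1] using (map_unit 1).symm
  have hz := map_unit x
  rwa [hx, map_add, map_add, ← nsmul_one, map_nsmul, map_nsmul, hS1, hd1, smul_zero, zero_add,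
    zero_add] at hz

end BanachUnits

/-- On a complex unital semisimple Banach `*`-algebra, if `W` is a left separating point
and `δ(W) = A δ(B)* + B* δ(A)` whenever `A B* = W`, then `δ = 0`. -/
theorem stmt11 {A : Type*}
    [NormedRing A] [NormedAlgebra ℂ A] [CompleteSpace A] [StarRing A]
    (hss : (⊥ : Ideal A).jacobson = ⊥)
    (W : A) (hW : ∀ a : A, W * a = 0 → a = 0)
    (δ : A →ₗ[ℂ] A)
    (hδ : ∀ a b : A, a * star b = W → δ W = a * star (δ b) + star b * δ a) :
    δ = 0 := by
  have hδ1 : δ 1 = 0 := by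
    have h := hδ W 1 (by simp)
    rw [star_one, one_mul, right_eq_add] at h
    exact star_eq_zero.mp (hW _ h)
  let d : A →ₗ[ℂ] A := LinearMap.mulLeft ℂ W ∘ₗ δ
  let S : A →+ A :=
    { toFun := fun x => star (δ (star (x * W))) - x * δ W
      map_zero' := by simp
      map_add' := fun x y => by simp [add_mul, add_sub_add_comm] }
  have hS1 : S 1 = 0 := by
    simpa [S, hδ1, sub_eq_zero, eq_comm (a := δ W)] using hδ 1 (star W) (by simp)
  have hSd (x : Aˣ) : (x * x : A) * d ↑x⁻¹ = -S x := by
    have h := congrArg ((x : A) * ·) (hδ ↑x⁻¹ (star (x * W)) (by simp))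
    simp [S, d, h, mul_add, ← mul_assoc]
  have hd : IsJordanLeftDerivation d := by
    simpa only [funext (eq_of_sq_mul_map_inv hSd hS1)] using
      isJordanLeftDerivation_of_sq_mul_map_inv hSd hS1
  exact LinearMap.ext fun a => hW _ (LinearMap.congr_fun (hd.eq_zero hss) a)
end

section
/- Let M have the property 𝕄. If δ, τ : A → M are linear and δ(A)∘B + A∘τ(B) = 0 whenever A∘B = 0, then there exists a Jordan derivation Δ : A → M with δ(A) = Δ(A) + δ(I)A and τ(A) = Δ(A) + Aτ(I) for all A ∈ A. -/
open MulOpposite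

/-
Jordan derivations `D : A → M` correspond to Jordan homomorphisms `a ↦ a + D a` into the split
extension `A ⋉ M`. For an idempotent `e` every `a` is the sum of an element commuting with `e` and
of `⁅e, ⁅e, a⁆⁆`, which is a linear combination of idempotents, as is `⁅e, a⁆`.

Testing the hypothesis on `(e, 1 - e)`, `(2e - 1, ⁅e, ⁅e, a⁆⁆)` and the like shows that
`D a = δ a - δ 1 a` and `T a = τ a - a τ 1` agree on idempotents and satisfy the Jordan derivation
rule `D (a ∘ e) = D a ∘ e + a ∘ D e` there. By the decomposition above, the set of `x` with
`D (a ∘ x) = D a ∘ x + a ∘ D x` for all `a` is stable under `x ↦ e ∘ x`, so it contains the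
subalgebra generated by the idempotents. The same applies to `D - T`, so `x ∘ (D - T) a = 0` for
`x ∈ J`. The defect `m = D (a ^ 2) - D a ∘ a` does not change when a linear combination of
idempotents is added to `a`, hence commutes with every idempotent, and `x ∘ (x ∘ m) = 0` for
`x ∈ J`. In both cases `x m x = 0`.
-/

/-- The Jordan product of a ring. -/
local notation:70 a:71 "∘ⱼ" b:71 => a * b + b * a

/-- The Jordan action of a ring on a bimodule, the right action being that of `Aᵐᵒᵖ`. -/
local notation:73 a:74 "•ⱼ" m:73 => a • m + op a • m

section Generalities

variable {R A N : Type*} [CommRing R] [Ring A] [Algebra R A] [AddCommGroup N] [Module R N]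

variable (R) in
lemma eq_of_add_self_eq_add_self [Invertible (2 : R)] {x y : N} (hxy : x + x = y + y) : x = y := by
  rw [← two_smul R, ← two_smul R y] at hxy
  simpa only [invOf_smul_smul] using congrArg (⅟(2 : R) • ·) hxy

lemma mem_of_mem_adjoin_of_mul_left_mem {s : Set A} {S : Submodule R A} (h1 : 1 ∈ S)
    (hmul : ∀ a ∈ s, ∀ x ∈ S, a * x ∈ S) {x : A} (hx : x ∈ Algebra.adjoin R s) : x ∈ S := by
  rw [← Subalgebra.mem_toSubmodule, Algebra.adjoin_eq_span] at hx
  refine Submodule.span_le.2 (fun y hy => ?_) hx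
  induction hy using Submonoid.closure_induction_left with
  | one => exact h1
  | mul_left a ha y _ ih => exact hmul a ha y ih

end Generalities

section Bimodule

variable (R : Type*) {A M : Type*} [CommRing R] [Ring A] [Algebra R A]
  [AddCommGroup M] [Module R M]

/-- The linear map `a ↦ a m` from an algebra to a bimodule. -/
def leftSMulLinear [Module A M] [IsScalarTower R A M] (m : M) : A →ₗ[R] M :=
  (LinearMap.toSpanSingleton A M m).restrictScalars R

/-- The linear map `a ↦ m a` from an algebra to a bimodule. -/
def rightSMulLinear [Module Aᵐᵒᵖ M] [IsScalarTower R Aᵐᵒᵖ M] (m : M) : A →ₗ[R] M :=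
  (LinearMap.toSpanSingleton Aᵐᵒᵖ M m).restrictScalars R ∘ₗ (opLinearEquiv R).toLinearMap

@[simp]
lemma leftSMulLinear_apply [Module A M] [IsScalarTower R A M] (m : M) (a : A) :
    leftSMulLinear R m a = a • m := rfl

@[simp]
lemma rightSMulLinear_apply [Module Aᵐᵒᵖ M] [IsScalarTower R Aᵐᵒᵖ M] (m : M) (a : A) :
    rightSMulLinear R m a = op a • m := rfl

end Bimodule

section Peirce

variable {A : Type*} [Ring A] {e : A}

lemma isIdempotentElem_add_mul_one_sub (he : IsIdempotentElem e) (a : A) :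
    IsIdempotentElem (e + e * a * (1 - e)) := by
  rw [IsIdempotentElem]
  simp only [mul_add, add_mul, mul_sub, sub_mul, mul_assoc, he.eq, he.mul_self_mul, mul_one]
  abel

lemma isIdempotentElem_add_one_sub_mul (he : IsIdempotentElem e) (a : A) :
    IsIdempotentElem (e + (1 - e) * a * e) := by
  rw [IsIdempotentElem]
  simp only [mul_add, add_mul, mul_sub, sub_mul, mul_assoc, he.eq, he.mul_self_mul, one_mul]
  abel

lemma lie_lie_lie_of_isIdempotentElem (he : IsIdempotentElem e) (a : A) :
    ⁅e, ⁅e, ⁅e, a⁆⁆⁆ = ⁅e, a⁆ := by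
  simp only [Ring.lie_def, mul_sub, sub_mul, mul_assoc, he.eq, he.mul_self_mul]
  abel

lemma commute_sub_lie_lie (he : IsIdempotentElem e) (a : A) : Commute e (a - ⁅e, ⁅e, a⁆⁆) := by
  have hlie : ⁅e, a - ⁅e, ⁅e, a⁆⁆⁆ = ⁅e, a⁆ - ⁅e, ⁅e, ⁅e, a⁆⁆⁆ := by
    rw [Ring.lie_def e (a - _), mul_sub, sub_mul, Ring.lie_def e a, Ring.lie_def e ⁅e, _⁆]
    abel
  rw [commute_iff_lie_eq, hlie, lie_lie_lie_of_isIdempotentElem he, sub_self]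

lemma jordan_lie_of_isIdempotentElem (he : IsIdempotentElem e) (a : A) : ⁅e, a⁆ ∘ⱼ e = ⁅e, a⁆ := by
  simp only [Ring.lie_def, mul_sub, sub_mul, mul_assoc, he.eq, he.mul_self_mul]
  abel

lemma lie_lie_eq_jordan (he : IsIdempotentElem e) (a : A) :
    ⁅e, ⁅e, a⁆⁆ = a ∘ⱼ e + a ∘ⱼ e - (a ∘ⱼ e) ∘ⱼ e := by
  simp only [Ring.lie_def, mul_sub, sub_mul, mul_add, add_mul, mul_assoc, he.eq, he.mul_self_mul]
  abel

lemma jordan_jordan_of_commute {b : A} (hb : Commute e b) (x : A) :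
    b ∘ⱼ (x ∘ⱼ e) = (b ∘ⱼ x) ∘ⱼ e := by
  have hcomm : b * e = e * b := hb.eq.symm
  linear_combination (norm := noncomm_ring) hcomm * x - x * hcomm

variable (R : Type*) [CommRing R] [Algebra R A]

lemma lie_mem_span_isIdempotentElem (he : IsIdempotentElem e) (a : A) :
    ⁅e, a⁆ ∈ Submodule.span R {e : A | IsIdempotentElem e} := by
  have hlie : ⁅e, a⁆ = (e + e * a * (1 - e)) - (e + (1 - e) * a * e) := by
    rw [Ring.lie_def]
    noncomm_ring
  rw [hlie]
  exact sub_mem (Submodule.subset_span (isIdempotentElem_add_mul_one_sub he a))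
    (Submodule.subset_span (isIdempotentElem_add_one_sub_mul he a))

lemma exists_commute_add_mem_span (he : IsIdempotentElem e) (a : A) :
    ∃ b, Commute e b ∧ ∃ k ∈ Submodule.span R {e : A | IsIdempotentElem e}, b + k = a :=
  ⟨_, commute_sub_lie_lie he a, _, lie_mem_span_isIdempotentElem R he _, sub_add_cancel a _⟩

variable {R} in
lemma mem_of_mem_adjoin_isIdempotentElem [Invertible (2 : R)] {S : Submodule R A}
    (hS : ∀ e, IsIdempotentElem e → e ∈ S)
    (hjordan : ∀ e, IsIdempotentElem e → ∀ x ∈ S, x ∘ⱼ e ∈ S) {x : A}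
    (hx : x ∈ Algebra.adjoin R {e : A | IsIdempotentElem e}) : x ∈ S := by
  refine mem_of_mem_adjoin_of_mul_left_mem (hS 1 .one) (fun e he y hy => ?_) hx
  have hsum : (2 : R) • (e * y) = y ∘ⱼ e + ⁅e, y⁆ := by
    rw [two_smul, Ring.lie_def]
    abel
  have hmem : (2 : R) • (e * y) ∈ S :=
    hsum ▸ add_mem (hjordan e he y hy)
      (Submodule.span_le.2 hS (lie_mem_span_isIdempotentElem R he y))
  simpa only [invOf_smul_smul] using S.smul_mem (⅟2) hmem

end Peirce

section JordanMultiplicative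

variable {R A B : Type*} [CommRing R] [Ring A] [Algebra R A] [Ring B] [Algebra R B]

/-- The set of elements at which a linear map `σ` respects the Jordan product with every other
element; `σ` is a Jordan homomorphism if and only if this is the whole algebra. -/
def jordanMulSubmodule (σ : A →ₗ[R] B) : Submodule R A where
  carrier := {x | ∀ a, σ (a ∘ⱼ x) = σ a ∘ⱼ σ x}
  add_mem' {x y} hx hy a := by
    have hxy : a ∘ⱼ (x + y) = a ∘ⱼ x + a ∘ⱼ y := by noncomm_ring
    rw [hxy, map_add, hx, hy, map_add]
    noncomm_ring
  zero_mem' a := by simp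
  smul_mem' r x hx a := by
    rw [mul_smul_comm, smul_mul_assoc, ← smul_add, map_smul, hx, map_smul, mul_smul_comm,
      smul_mul_assoc, smul_add]

/-- The failure `σ (a ^ 2) - (σ a) ^ 2` of `σ` to preserve the square of `a`. -/
def squareDefect (σ : A →ₗ[R] B) (a : A) : B := σ (a * a) - σ a * σ a

variable {σ : A →ₗ[R] B} [Invertible (2 : R)]

lemma map_mul_self_of_mem {x : A} (hx : x ∈ jordanMulSubmodule σ) : σ (x * x) = σ x * σ x :=
  eq_of_add_self_eq_add_self R (by rw [← map_add, hx])

lemma squareDefect_add_of_mem {x : A} (hx : x ∈ jordanMulSubmodule σ) (a : A) :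
    squareDefect σ (a + x) = squareDefect σ a := by
  have hsq : (a + x) * (a + x) = a * a + a ∘ⱼ x + x * x := by noncomm_ring
  rw [squareDefect, squareDefect, hsq, map_add, map_add, hx, map_add, map_mul_self_of_mem hx]
  noncomm_ring

lemma map_mul_mul_self_of_mem {x : A} (hx : x ∈ jordanMulSubmodule σ)
    (hxx : x * x ∈ jordanMulSubmodule σ) (a : A) : σ (x * a * x) = σ x * σ a * σ x := by
  apply eq_of_add_self_eq_add_self R
  have hdouble : x * a * x + x * a * x = (a ∘ⱼ x) ∘ⱼ x - a ∘ⱼ (x * x) := by noncomm_ring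
  rw [← map_add, hdouble, map_sub, hx, hx, hxx, map_mul_self_of_mem hx]
  noncomm_ring

lemma jordan_jordan_squareDefect {x a : A} (hx : x ∈ jordanMulSubmodule σ)
    (hxx : x * x ∈ jordanMulSubmodule σ) (hax : a ∘ⱼ x ∈ jordanMulSubmodule σ)
    (hxax : x * a * x ∈ jordanMulSubmodule σ) :
    σ x ∘ⱼ (σ x ∘ⱼ squareDefect σ a) = 0 := by
  have hdouble : σ (a * x * a) + σ (a * x * a) =
      σ a ∘ⱼ (σ a ∘ⱼ σ x) - σ (a * a) ∘ⱼ σ x := by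
    rw [← hx, ← hx, ← hax, ← map_add, ← map_sub]
    congr 1
    noncomm_ring
  have hfour : σ (a * x * a) ∘ⱼ σ x = σ a ∘ⱼ (σ x * σ a * σ x) := by
    rw [← map_mul_mul_self_of_mem hx hxx, ← hx, ← hxax]
    congr 1
    noncomm_ring
  rw [squareDefect]
  linear_combination (norm := noncomm_ring) hdouble * σ x + σ x * hdouble - 2 * hfour

variable (hσ : ∀ e : A, IsIdempotentElem e → e ∈ jordanMulSubmodule σ) {e : A}

include hσ

lemma isIdempotentElem_map (he : IsIdempotentElem e) : IsIdempotentElem (σ e) := by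
  rw [IsIdempotentElem, ← map_mul_self_of_mem (hσ e he), he.eq]

lemma map_lie_lie (he : IsIdempotentElem e) (a : A) : σ ⁅e, ⁅e, a⁆⁆ = ⁅σ e, ⁅σ e, σ a⁆⁆ := by
  rw [lie_lie_eq_jordan he, lie_lie_eq_jordan (isIdempotentElem_map hσ he), map_sub, map_add,
    hσ e he (a ∘ⱼ e), hσ e he a]

lemma commute_map (he : IsIdempotentElem e) {b : A} (hb : Commute e b) : Commute (σ e) (σ b) := by
  have hlie : ⁅σ e, ⁅σ e, σ b⁆⁆ = 0 := by
    rw [← map_lie_lie hσ he, commute_iff_lie_eq.1 hb, Ring.lie_def, mul_zero, zero_mul, sub_zero,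
      map_zero]
  rw [commute_iff_lie_eq, ← lie_lie_lie_of_isIdempotentElem (isIdempotentElem_map hσ he), hlie,
    Ring.lie_def, mul_zero, zero_mul, sub_zero]

lemma jordan_mem_jordanMulSubmodule (he : IsIdempotentElem e) {x : A}
    (hx : x ∈ jordanMulSubmodule σ) : x ∘ⱼ e ∈ jordanMulSubmodule σ := by
  intro a
  obtain ⟨b, hb, k, hk, rfl⟩ := exists_commute_add_mem_span R he a
  have hbx : σ (b ∘ⱼ (x ∘ⱼ e)) = σ b ∘ⱼ σ (x ∘ⱼ e) := by
    rw [jordan_jordan_of_commute hb, hσ e he, hx, hσ e he,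
      jordan_jordan_of_commute (commute_map hσ he hb)]
  have hkx : σ ((x ∘ⱼ e) ∘ⱼ k) = σ (x ∘ⱼ e) ∘ⱼ σ k := Submodule.span_le.2 hσ hk _
  have hsplit : (b + k) ∘ⱼ (x ∘ⱼ e) = b ∘ⱼ (x ∘ⱼ e) + (x ∘ⱼ e) ∘ⱼ k := by noncomm_ring
  rw [hsplit, map_add, hbx, hkx, map_add σ b]
  noncomm_ring

lemma mem_jordanMulSubmodule_of_mem_adjoin {x : A}
    (hx : x ∈ Algebra.adjoin R {e : A | IsIdempotentElem e}) : x ∈ jordanMulSubmodule σ :=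
  mem_of_mem_adjoin_isIdempotentElem hσ (fun _ he _ => jordan_mem_jordanMulSubmodule hσ he) hx

lemma commute_squareDefect (he : IsIdempotentElem e) (a : A) :
    Commute (σ e) (squareDefect σ a) := by
  obtain ⟨b, hb, k, hk, rfl⟩ := exists_commute_add_mem_span R he a
  rw [squareDefect_add_of_mem (Submodule.span_le.2 hσ hk)]
  exact (commute_map hσ he (hb.mul_right hb)).sub_right
    ((commute_map hσ he hb).mul_right (commute_map hσ he hb))

end JordanMultiplicative

section JordanLeibniz

variable {R A M : Type*} [CommRing R] [Ring A] [Algebra R A]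
  [AddCommGroup M] [Module R M] [Module A M] [Module Aᵐᵒᵖ M]

/-- The Leibniz rule for the Jordan product of `x` with every element; a linear map with values in
a bimodule is a Jordan derivation if it obeys this rule at every `x`. -/
def IsJordanLeibnizAt (D : A →ₗ[R] M) (x : A) : Prop :=
  ∀ a, D (a ∘ⱼ x) = x •ⱼ D a + a •ⱼ D x

lemma IsJordanLeibnizAt.sub {D T : A →ₗ[R] M} {x : A} (hD : IsJordanLeibnizAt D x)
    (hT : IsJordanLeibnizAt T x) : IsJordanLeibnizAt (D - T) x := by
  intro a
  simp only [LinearMap.sub_apply, hD a, hT a, smul_sub]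
  abel

lemma apply_eq_zero_of_mem_adjoin [Invertible (2 : R)] {D : A →ₗ[R] M}
    (hD : ∀ e : A, IsIdempotentElem e → IsJordanLeibnizAt D e)
    (hD0 : ∀ e : A, IsIdempotentElem e → D e = 0) {x : A}
    (hx : x ∈ Algebra.adjoin R {e : A | IsIdempotentElem e}) : D x = 0 :=
  mem_of_mem_adjoin_isIdempotentElem (S := LinearMap.ker D) hD0 (fun e he y hy => by
    rw [LinearMap.mem_ker] at hy ⊢
    simp only [hD e he y, hy, hD0 e he, smul_zero, add_zero]) hx

variable [SMulCommClass A Aᵐᵒᵖ M] [IsScalarTower R A M] [IsScalarTower R Aᵐᵒᵖ M]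

lemma isJordanLeibnizAt_inner (m : M) (x : A) :
    IsJordanLeibnizAt (leftSMulLinear R m - rightSMulLinear R m) x := by
  intro a
  simp only [LinearMap.sub_apply, leftSMulLinear_apply, rightSMulLinear_apply, op_add, op_mul,
    add_smul, mul_smul, smul_sub, smul_comm x (op a), smul_comm a (op x)]
  abel

/-- The linear map `a ↦ (a, D a)` into the split extension `A ⋉ M`, which turns the Leibniz rule
for `D` into multiplicativity with respect to the Jordan product. -/
def jordanLift (D : A →ₗ[R] M) : A →ₗ[R] TrivSqZeroExt A M where
  toFun a := .inl a + .inr (D a)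
  map_add' a b := by
    rw [map_add, TrivSqZeroExt.inl_add, TrivSqZeroExt.inr_add, add_add_add_comm]
  map_smul' r a := by
    rw [map_smul, TrivSqZeroExt.inl_smul, TrivSqZeroExt.inr_smul, smul_add, RingHom.id_apply]

lemma mem_jordanMulSubmodule_jordanLift {D : A →ₗ[R] M} {x : A} :
    x ∈ jordanMulSubmodule (jordanLift D) ↔ IsJordanLeibnizAt D x := by
  refine forall_congr' fun a => ?_
  rw [TrivSqZeroExt.ext_iff, add_comm (x •ⱼ D a), add_add_add_comm, add_comm (op a • D x),
    ← add_add_add_comm]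
  simp [jordanLift]

lemma squareDefect_jordanLift (D : A →ₗ[R] M) (a : A) :
    squareDefect (jordanLift D) a = .inr (D (a * a) - a •ⱼ D a) := by
  apply TrivSqZeroExt.ext <;> simp [squareDefect, jordanLift]

lemma smul_eq_op_smul_of_mem_adjoin {s : Set A} {m : M} (hm : ∀ a ∈ s, a • m = op a • m) {x : A}
    (hx : x ∈ Algebra.adjoin R s) : x • m = op x • m := by
  refine mem_of_mem_adjoin_of_mul_left_mem
    (S := LinearMap.eqLocus (leftSMulLinear R m) (rightSMulLinear R m)) ?_ ?_ hx
  · simp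
  · intro a ha y hy
    rw [LinearMap.mem_eqLocus, leftSMulLinear_apply, rightSMulLinear_apply] at hy ⊢
    rw [op_mul, mul_smul, mul_smul, ← hm a ha, hy, smul_comm]

variable [Invertible (2 : R)] {D : A →ₗ[R] M}
  (hD : ∀ e : A, IsIdempotentElem e → IsJordanLeibnizAt D e)

include hD

lemma isJordanLeibnizAt_of_mem_adjoin {x : A}
    (hx : x ∈ Algebra.adjoin R {e : A | IsIdempotentElem e}) : IsJordanLeibnizAt D x :=
  mem_jordanMulSubmodule_jordanLift.1 <| mem_jordanMulSubmodule_of_mem_adjoin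
    (fun e he => mem_jordanMulSubmodule_jordanLift.2 (hD e he)) hx

lemma smul_sub_jordan_comm {e : A} (he : IsIdempotentElem e) (a : A) :
    e • (D (a * a) - a •ⱼ D a) = op e • (D (a * a) - a •ⱼ D a) := by
  have hcomm := commute_squareDefect
    (fun e he => mem_jordanMulSubmodule_jordanLift.2 (hD e he)) he a
  rw [squareDefect_jordanLift] at hcomm
  simpa [jordanLift] using congrArg TrivSqZeroExt.snd hcomm.eq

lemma op_smul_smul_sub_jordan_eq_zero {x a : A}
    (hx : x ∈ Algebra.adjoin R {e : A | IsIdempotentElem e})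
    (hax : a * x ∈ Algebra.adjoin R {e : A | IsIdempotentElem e})
    (hxa : x * a ∈ Algebra.adjoin R {e : A | IsIdempotentElem e}) :
    op x • x • (D (a * a) - a •ⱼ D a) = 0 := by
  have hσ (e : A) (he : IsIdempotentElem e) : e ∈ jordanMulSubmodule (jordanLift D) :=
    mem_jordanMulSubmodule_jordanLift.2 (hD e he)
  have hcomm : x • (D (a * a) - a •ⱼ D a) = op x • (D (a * a) - a •ⱼ D a) :=
    smul_eq_op_smul_of_mem_adjoin (fun e he => smul_sub_jordan_comm hD he a) hx
  have hjordan := jordan_jordan_squareDefect (mem_jordanMulSubmodule_of_mem_adjoin hσ hx)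
    (mem_jordanMulSubmodule_of_mem_adjoin hσ (mul_mem hx hx))
    (mem_jordanMulSubmodule_of_mem_adjoin hσ (add_mem hax hxa))
    (mem_jordanMulSubmodule_of_mem_adjoin hσ (mul_mem hxa hx))
  rw [squareDefect_jordanLift] at hjordan
  have hfour : x •ⱼ (x •ⱼ (D (a * a) - a •ⱼ D a)) = 0 := by
    simpa [jordanLift, -smul_add] using congrArg TrivSqZeroExt.snd hjordan
  generalize D (a * a) - a •ⱼ D a = m at *
  apply eq_of_add_self_eq_add_self R
  apply eq_of_add_self_eq_add_self R
  linear_combination (norm := (simp only [smul_add, smul_comm x (op x)]; abel))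
    hfour - x • hcomm + op x • hcomm

lemma op_smul_smul_apply_eq_zero (hD0 : ∀ e : A, IsIdempotentElem e → D e = 0) {x a : A}
    (hx : x ∈ Algebra.adjoin R {e : A | IsIdempotentElem e})
    (hax : a * x ∈ Algebra.adjoin R {e : A | IsIdempotentElem e})
    (hxa : x * a ∈ Algebra.adjoin R {e : A | IsIdempotentElem e}) :
    op x • x • D a = 0 := by
  have hjordan {y : A} (hy : y ∈ Algebra.adjoin R {e : A | IsIdempotentElem e})
      (hay : a ∘ⱼ y ∈ Algebra.adjoin R {e : A | IsIdempotentElem e}) : y •ⱼ D a = 0 := by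
    have hleibniz := isJordanLeibnizAt_of_mem_adjoin hD hy a
    rw [apply_eq_zero_of_mem_adjoin hD hD0 hy, apply_eq_zero_of_mem_adjoin hD hD0 hay] at hleibniz
    simpa only [smul_zero, add_zero] using hleibniz.symm
  have hxD := hjordan hx (add_mem hax hxa)
  have hxxD : (x * x) •ⱼ D a = 0 := hjordan (mul_mem hx hx)
    (add_mem (mul_assoc a x x ▸ mul_mem hax hx) (mul_assoc x x a ▸ mul_mem hx hxa))
  apply eq_of_add_self_eq_add_self R
  linear_combination (norm :=
      (simp only [op_mul, mul_smul, smul_add, smul_zero, smul_comm x (op x)]; abel))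
    x • hxD + op x • hxD - hxxD

end JordanLeibniz

section JordanZeroPair

variable {R A M : Type*} [CommRing R] [Ring A] [Algebra R A]
  [AddCommGroup M] [Module R M] [Module A M] [Module Aᵐᵒᵖ M]

/-- A pair `(δ, τ)` of linear maps into a bimodule that satisfies the Leibniz-type identity
`δ a ∘ b + a ∘ τ b = 0` on all pairs with zero Jordan product. -/
def IsJordanZeroPair (δ τ : A →ₗ[R] M) : Prop :=
  ∀ a b : A, a ∘ⱼ b = 0 → b •ⱼ δ a + a •ⱼ τ b = 0

namespace IsJordanZeroPair

variable {δ τ : A →ₗ[R] M} {e : A}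

lemma symm (h : IsJordanZeroPair δ τ) : IsJordanZeroPair τ δ := fun a b hab => by
  rw [add_comm, h b a (by rw [add_comm, hab])]

lemma add_self_leibniz (h : IsJordanZeroPair δ τ) (he : IsIdempotentElem e) (a : A) :
    (e •ⱼ δ a + a •ⱼ τ e) + (e •ⱼ δ a + a •ⱼ τ e) =
      δ (a ∘ⱼ e) + δ (a ∘ⱼ e) + (a ∘ⱼ e) •ⱼ τ 1 := by
  obtain ⟨b, k, hb, hk, rfl⟩ : ∃ b k, b * e = e * b ∧ k ∘ⱼ e = k ∧ b + k = a :=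
    ⟨_, _, (commute_sub_lie_lie he a).eq.symm, jordan_lie_of_isIdempotentElem he _,
      sub_add_cancel a _⟩
  have hk0 := h k (e + e - 1) (by linear_combination (norm := noncomm_ring) hk + hk)
  have hb1 := h (b * e) (1 - e) (by
    simp only [mul_sub, sub_mul, hb, mul_assoc, he.mul_self_mul, mul_one, one_mul]
    abel)
  have hb0 := h (b - b * e) e (by
    simp only [mul_sub, sub_mul, hb, mul_assoc, he.mul_self_mul]
    abel)
  have hbk : (b + k) ∘ⱼ e = b * e + b * e + k := by
    linear_combination (norm := noncomm_ring) hk - hb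
  rw [hbk]
  simp only [map_add, map_sub, op_add, op_sub, op_one, add_smul, sub_smul, smul_add, smul_sub,
    one_smul] at hk0 hb1 hb0 ⊢
  linear_combination (norm := abel) hk0 + hb0 + hb0 - hb1 - hb1

lemma smul_add_map_one_comm [SMulCommClass A Aᵐᵒᵖ M] (h : IsJordanZeroPair δ τ)
    (he : IsIdempotentElem e) : e • (δ 1 + τ 1) = op e • (δ 1 + τ 1) := by
  have hcomm (m : M) : e • (e •ⱼ m) - op e • (e •ⱼ m) = e • m - op e • m := by
    rw [smul_add, smul_add, smul_smul, smul_smul, he.eq, ← op_mul, he.eq, smul_comm e (op e)]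
    abel
  have h10 : e ∘ⱼ (1 - e) = 0 := by rw [he.mul_one_sub_self, he.one_sub_mul_self, add_zero]
  have h1 := h e (1 - e) h10
  have h2 := h (1 - e) e (by rw [add_comm, h10])
  have hδ := hcomm (δ 1 - δ e - δ e)
  have hτ := hcomm (τ 1 - τ e - τ e)
  simp only [map_sub, op_sub, op_one, sub_smul, one_smul, smul_add, smul_sub] at h1 h2 hδ hτ ⊢
  linear_combination (norm := (simp only [smul_add, smul_sub, smul_zero]; abel))
    e • h1 - op e • h1 + (e • h2 - op e • h2) - hδ - hτ

lemma sub_op_smul_map_one_eq [Invertible (2 : R)] [SMulCommClass A Aᵐᵒᵖ M]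
    (h : IsJordanZeroPair δ τ) (he : IsIdempotentElem e) :
    δ e - op e • δ 1 = τ e - e • τ 1 := by
  apply eq_of_add_self_eq_add_self R
  have h10 : e ∘ⱼ (1 - e) = 0 := by rw [he.mul_one_sub_self, he.one_sub_mul_self, add_zero]
  have h1 := h e (1 - e) h10
  have h2 := h (1 - e) e (by rw [add_comm, h10])
  have hs := h.smul_add_map_one_comm he
  simp only [map_sub, op_sub, op_one, sub_smul, one_smul, smul_add, smul_sub] at h1 h2 hs ⊢
  linear_combination (norm := abel) h1 - h2 + hs

lemma mul_smul_map_one_comm_of_jordan_eq_zero [Invertible (2 : R)] [SMulCommClass A Aᵐᵒᵖ M]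
    (h : IsJordanZeroPair δ τ) {u k : A} (huk : u ∘ⱼ k = 0)
    (hu : u • (δ 1 + τ 1) = op u • (δ 1 + τ 1)) (hk : k • (δ 1 + τ 1) = op k • (δ 1 + τ 1))
    (hu' : δ u - op u • δ 1 = τ u - u • τ 1) (hk' : δ k - op k • δ 1 = τ k - k • τ 1) :
    (u * k) • τ 1 = op (u * k) • τ 1 := by
  apply eq_of_add_self_eq_add_self R
  have h1 := h u k huk
  have h2 := h k u (by rw [add_comm, huk])
  have hku : k * u = -(u * k) := eq_neg_of_add_eq_zero_right huk
  have hleft (m : M) : k • u • m = -(u • k • m) := by rw [smul_smul, hku, neg_smul, mul_smul]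
  have hright (m : M) : op u • op k • m = -(op k • op u • m) := by
    rw [smul_smul, ← op_mul, hku, op_neg, neg_smul, op_mul, mul_smul]
  linear_combination (norm := (simp only [mul_smul, op_mul, smul_add, smul_sub, hleft,
      hright, smul_comm u (op _), smul_comm k (op _)]; abel))
    h1 - h2 - (k • hu' + op k • hu') + (u • hk' + op u • hk') - op u • hk + op k • hu

variable [SMulCommClass A Aᵐᵒᵖ M] [IsScalarTower R A M] [IsScalarTower R Aᵐᵒᵖ M]

lemma smul_add_map_one_comm_of_mem_span (h : IsJordanZeroPair δ τ) {x : A}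
    (hx : x ∈ Submodule.span R {e : A | IsIdempotentElem e}) :
    x • (δ 1 + τ 1) = op x • (δ 1 + τ 1) :=
  LinearMap.eqOn_span (f := leftSMulLinear R (δ 1 + τ 1)) (g := rightSMulLinear R (δ 1 + τ 1))
    (fun _ he => h.smul_add_map_one_comm he) hx

variable [Invertible (2 : R)]

lemma sub_op_smul_map_one_eq_of_mem_span (h : IsJordanZeroPair δ τ) {x : A}
    (hx : x ∈ Submodule.span R {e : A | IsIdempotentElem e}) :
    δ x - op x • δ 1 = τ x - x • τ 1 :=
  LinearMap.eqOn_span (f := δ - rightSMulLinear R (δ 1)) (g := τ - leftSMulLinear R (τ 1))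
    (fun _ he => h.sub_op_smul_map_one_eq he) hx

lemma lie_smul_map_one_comm (h : IsJordanZeroPair δ τ) (he : IsIdempotentElem e) (a : A) :
    ⁅e, a⁆ • τ 1 = op ⁅e, a⁆ • τ 1 := by
  have huk : (e + e - 1) ∘ⱼ ⁅e, ⁅e, a⁆⁆ = 0 := by
    have hjordan := jordan_lie_of_isIdempotentElem he ⁅e, a⁆
    linear_combination (norm := noncomm_ring) hjordan + hjordan
  have hmul : (e + e - 1) * ⁅e, ⁅e, a⁆⁆ = ⁅e, a⁆ := by
    simp only [Ring.lie_def, mul_sub, sub_mul, add_mul, mul_assoc, he.eq, he.mul_self_mul, one_mul]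
    abel
  have hu : e + e - 1 ∈ Submodule.span R {e : A | IsIdempotentElem e} :=
    sub_mem (add_mem (Submodule.subset_span he) (Submodule.subset_span he))
      (Submodule.subset_span .one)
  have hk := lie_mem_span_isIdempotentElem R he ⁅e, a⁆
  simpa only [hmul] using h.mul_smul_map_one_comm_of_jordan_eq_zero huk
    (h.smul_add_map_one_comm_of_mem_span hu) (h.smul_add_map_one_comm_of_mem_span hk)
    (h.sub_op_smul_map_one_eq_of_mem_span hu) (h.sub_op_smul_map_one_eq_of_mem_span hk)

lemma isJordanLeibnizAt_sub_rightSMul (h : IsJordanZeroPair δ τ) (he : IsIdempotentElem e) :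
    IsJordanLeibnizAt (δ - rightSMulLinear R (δ 1)) e := by
  intro a
  apply eq_of_add_self_eq_add_self R
  have hleibniz := h.add_self_leibniz he a
  have hsub := h.sub_op_smul_map_one_eq he
  have hcomm := h.smul_add_map_one_comm he
  have hlie := h.lie_smul_map_one_comm he a
  rw [Ring.lie_def] at hlie
  simp only [LinearMap.sub_apply, rightSMulLinear_apply]
  linear_combination (norm := (simp only [mul_smul, op_mul, op_add, op_sub, add_smul, sub_smul,
      smul_add, smul_sub, smul_comm e (op _), smul_comm a (op _)]; abel))
    -hleibniz - (a • (hsub + hsub) + op a • (hsub + hsub)) + op a • (hcomm + hcomm) - hlie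

lemma isJordanLeibnizAt_sub_leftSMul (h : IsJordanZeroPair δ τ) (he : IsIdempotentElem e) :
    IsJordanLeibnizAt (τ - leftSMulLinear R (τ 1)) e := by
  rw [← sub_sub_sub_cancel_right τ _ (rightSMulLinear R (τ 1))]
  exact (h.symm.isJordanLeibnizAt_sub_rightSMul he).sub (isJordanLeibnizAt_inner (τ 1) e)

end IsJordanZeroPair
end JordanZeroPair

theorem stmt17_general {R A M : Type*} [CommRing R] [Invertible (2 : R)] [Ring A] [Algebra R A]
    [AddCommGroup M] [Module R M] [Module A M] [Module Aᵐᵒᵖ M]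
    [SMulCommClass A Aᵐᵒᵖ M] [IsScalarTower R A M] [IsScalarTower R Aᵐᵒᵖ M]
    (J : Set A)
    (hJsub : ∀ x ∈ J, x ∈ Algebra.adjoin R {e : A | IsIdempotentElem e})
    (hJl : ∀ (a : A), ∀ x ∈ J, a * x ∈ J)
    (hJr : ∀ (a : A), ∀ x ∈ J, x * a ∈ J)
    (hM : ∀ m : M, (∀ x ∈ J, op x • (x • m) = 0) → m = 0)
    (δ τ : A →ₗ[R] M)
    (h : ∀ a b : A, a * b + b * a = 0 →
      (op b • δ a + b • δ a) + (a • τ b + op a • τ b) = 0) :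
    ∃ Δ : A →ₗ[R] M,
      (∀ a : A, Δ (a * a) = op a • Δ a + a • Δ a) ∧
      (∀ a : A, δ a = Δ a + op a • δ 1) ∧
      (∀ a : A, τ a = Δ a + a • τ 1) := by
  have hpair : IsJordanZeroPair δ τ := fun a b hab => by rw [add_comm (b • δ a), h a b hab]
  let D := δ - rightSMulLinear R (δ 1)
  let T := τ - leftSMulLinear R (τ 1)
  have hD (e : A) (he : IsIdempotentElem e) : IsJordanLeibnizAt D e :=
    hpair.isJordanLeibnizAt_sub_rightSMul he
  have hDT (e : A) (he : IsIdempotentElem e) : IsJordanLeibnizAt (D - T) e :=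
    (hD e he).sub (hpair.isJordanLeibnizAt_sub_leftSMul he)
  have hDT0 (e : A) (he : IsIdempotentElem e) : (D - T) e = 0 :=
    sub_eq_zero.2 (hpair.sub_op_smul_map_one_eq he)
  have hsq (a : A) : D (a * a) = a •ⱼ D a := sub_eq_zero.1 <| hM _ fun x hx =>
    op_smul_smul_sub_jordan_eq_zero hD (hJsub x hx) (hJsub _ (hJl a x hx)) (hJsub _ (hJr a x hx))
  have heq (a : A) : D a = T a := sub_eq_zero.1 <| hM _ fun x hx =>
    op_smul_smul_apply_eq_zero hDT hDT0 (hJsub x hx) (hJsub _ (hJl a x hx)) (hJsub _ (hJr a x hx))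
  exact ⟨D, fun a => by rw [hsq, add_comm], fun a => (sub_add_cancel (δ a) _).symm,
    fun a => heq a ▸ (sub_add_cancel (τ a) _).symm⟩

/-- Let `M` have property `𝕄`. If `δ(A)∘B + A∘τ(B) = 0` whenever `A∘B = 0`, then there
is a Jordan derivation `Δ` with `δ(A) = Δ(A) + δ(I)A` and `τ(A) = Δ(A) + A τ(I)`. -/
theorem stmt17 {A : Type*} {M : Type*}
    [Ring A] [Algebra ℂ A]
    [AddCommGroup M] [Module ℂ M] [Module A M] [Module Aᵐᵒᵖ M]
    [SMulCommClass A Aᵐᵒᵖ M] [IsScalarTower ℂ A M] [IsScalarTower ℂ Aᵐᵒᵖ M]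
    (J : Set A)
    (hJsub : ∀ x ∈ J, x ∈ Algebra.adjoin ℂ {e : A | IsIdempotentElem e})
    (hJadd : ∀ x ∈ J, ∀ y ∈ J, x + y ∈ J)
    (hJl : ∀ (a : A), ∀ x ∈ J, a * x ∈ J)
    (hJr : ∀ (a : A), ∀ x ∈ J, x * a ∈ J)
    (hM : ∀ m : M, (∀ x ∈ J, op x • (x • m) = 0) → m = 0)
    (δ τ : A →ₗ[ℂ] M)
    (h : ∀ a b : A, a * b + b * a = 0 →
      (op b • δ a + b • δ a) + (a • τ b + op a • τ b) = 0) :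
    ∃ Δ : A →ₗ[ℂ] M,
      (∀ a : A, Δ (a * a) = op a • Δ a + a • Δ a) ∧
      (∀ a : A, δ a = Δ a + op a • δ 1) ∧
      (∀ a : A, τ a = Δ a + a • τ 1) :=
  stmt17_general J hJsub hJl hJr hM δ τ h
end
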